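/- Assume there exists a set N ⊆ [0,1] of positive Lebesgue outer measure such that for every function g : N → ℕ^ℕ there exists h : ℕ → ℕ with g(x) ≤* h for all x ∈ N (i.e. non(N) < 𝔟). Let C : ℕ → 𝒫(ℕ) be a nondecreasing sequence of subsets of ℕ generating the ideal I = {A ⊆ ℕ : A ⊆ C_k for some k}, let ε > 0, and let f_n : [0,1] → [0,1] be a sequence converging to 0 I-pointwise on [0,1]. Then there exists A ⊆ [0,1] with m*(A) ≥ 1 − ε such that f_n converges to 0 I-uniformly on A. -/

import Mathlib

open MeasureTheory Filter Set

/-- `f` converges to `0` `I`-pointwise on `A`, where `I` is the ideal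
generated by the nondecreasing sequence `C`. -/
def CgPointwise (C : ℕ → Set ℕ) (f : ℕ → ℝ → ℝ) (A : Set ℝ) : Prop :=
  ∀ δ : ℝ, 0 < δ → ∀ x ∈ A, ∃ k : ℕ, {n | δ ≤ f n x} ⊆ C k

/-- `f` converges to `0` `I`-uniformly on `A`, where `I` is the ideal
generated by the nondecreasing sequence `C`. -/
def CgUniform (C : ℕ → Set ℕ) (f : ℕ → ℝ → ℝ) (A : Set ℝ) : Prop :=
  ∀ δ : ℝ, 0 < δ → ∃ k : ℕ, ∀ x ∈ A, {n | δ ≤ f n x} ⊆ C k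

/-- A set of functions `ℕ → ℕ` is bounded if a single `h : ℕ → ℕ` dominates
all of its members everywhere. -/
def BddNatFun (S : Set (ℕ → ℕ)) : Prop :=
  ∃ h : ℕ → ℕ, ∀ f ∈ S, ∀ n, f n ≤ h n

open Topology in
/-- Two sets of positive Lebesgue outer measure, one of them measurable, meet after a rational
translation. -/
lemma exists_rat_add_mem_of_volume_pos {S T : Set ℝ} (hT : MeasurableSet T)
    (hS0 : 0 < volume S) (hT0 : 0 < volume T) : ∃ q : ℚ, ∃ x ∈ S, x + q ∈ T := by
  by_contra! hST
  have density_point : ∀ U : Set ℝ, 0 < volume U → ∃ x, ∀ (w : ℕ → ℝ) (δ : ℕ → ℝ),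
      Tendsto δ atTop (𝓝[>] 0) → (∀ᶠ j in atTop, x ∈ Metric.closedBall (w j) (1 * δ j)) →
      Tendsto (fun j => volume (U ∩ Metric.closedBall (w j) (δ j)) /
        volume (Metric.closedBall (w j) (δ j))) atTop (𝓝 1) := by
    intro U hU
    have : NeBot (ae (volume.restrict U)) := by
      rw [ae_neBot, Ne, Measure.restrict_eq_zero]
      exact hU.ne'
    obtain ⟨x, hx⟩ := (IsUnifLocDoublingMeasure.ae_tendsto_measure_inter_div volume U 1).exists
    exact ⟨x, fun w δ => hx w δ⟩
  obtain ⟨x, hx⟩ := density_point S hS0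
  obtain ⟨y, hy⟩ := density_point T hT0
  let δ : ℕ → ℝ := fun j => 1 / ((j : ℝ) + 1)
  have δ_pos : ∀ j, 0 < δ j := fun j => Nat.one_div_pos_of_nat
  have δ_lim : Tendsto δ atTop (𝓝[>] 0) :=
    tendsto_nhdsWithin_iff.2 ⟨tendsto_one_div_add_atTop_nhds_zero_nat, .of_forall δ_pos⟩
  have hq : ∀ j, ∃ q : ℚ, x ∈ Metric.closedBall (y - q) (1 * δ j) := by
    intro j
    obtain ⟨q, hq₁, hq₂⟩ := exists_rat_btwn (show y - x - δ j < y - x + δ j by linarith [δ_pos j])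
    refine ⟨q, ?_⟩
    rw [Metric.mem_closedBall, Real.dist_eq, abs_le]
    constructor <;> linarith
  choose q hq using hq
  have hxlim := hx (fun j => y - q j) δ δ_lim (.of_forall hq)
  have hylim := hy (fun _ => y) δ δ_lim
    (.of_forall fun j => Metric.mem_closedBall_self (by linarith [δ_pos j]))
  have half_lt : (1 / 2 : ENNReal) < 1 := by simp
  obtain ⟨j, hxj, hyj⟩ :=
    ((hxlim.eventually_const_lt half_lt).and (hylim.eventually_const_lt half_lt)).exists
  have vol_ball : ∀ z, volume (Metric.closedBall z (δ j)) = ENNReal.ofReal (2 * δ j) :=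
    fun z => Real.volume_closedBall z (δ j)
  have hd0 : ENNReal.ofReal (2 * δ j) ≠ 0 := by simpa using δ_pos j
  simp only [vol_ball] at hxj hyj
  rw [ENNReal.lt_div_iff_mul_lt (.inl hd0) (.inl ENNReal.ofReal_ne_top)] at hxj hyj
  have shift : volume ((fun z => z + -(q j : ℝ)) ⁻¹' (S ∩ Metric.closedBall (y - q j) (δ j))) =
      volume (S ∩ Metric.closedBall (y - q j) (δ j)) := measure_preimage_add_right _ _ _
  have disj : Disjoint ((fun z => z + -(q j : ℝ)) ⁻¹' (S ∩ Metric.closedBall (y - q j) (δ j)))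
      (T ∩ Metric.closedBall y (δ j)) := by
    rw [Set.disjoint_left]
    rintro z ⟨hzS, -⟩ ⟨hzT, -⟩
    exact hST (q j) _ hzS (by simpa using hzT)
  have sub : (fun z => z + -(q j : ℝ)) ⁻¹' (S ∩ Metric.closedBall (y - q j) (δ j)) ∪
      (T ∩ Metric.closedBall y (δ j)) ⊆ Metric.closedBall y (δ j) := by
    rintro z (⟨-, hz⟩ | ⟨-, hz⟩)
    · rw [Metric.mem_closedBall, Real.dist_eq] at hz ⊢
      convert hz using 2
      ring
    · exact hz
  have le := measure_mono (μ := volume) sub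
  rw [measure_union disj (hT.inter Metric.isClosed_closedBall.measurableSet), shift,
    vol_ball] at le
  refine (lt_of_lt_of_le (ENNReal.add_lt_add hxj hyj) le).ne ?_
  rw [← add_mul, ENNReal.add_halves, one_mul]

/-- The rational translates of a set of positive outer measure have full outer measure in
`[0, 1]`. -/
lemma one_le_volume_rat_translates {N : Set ℝ} (hN : 0 < volume N) :
    1 ≤ volume {x ∈ Icc (0 : ℝ) 1 | ∃ q : ℚ, x - q ∈ N} := by
  by_contra! hlt
  set N' : Set ℝ := {x ∈ Icc (0 : ℝ) 1 | ∃ q : ℚ, x - q ∈ N}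
  have hpos : 0 < volume (Icc (0 : ℝ) 1 \ toMeasurable volume N') := by
    refine lt_of_lt_of_le ?_ le_measure_sdiff
    rw [measure_toMeasurable, Real.volume_Icc]
    simpa using hlt
  obtain ⟨q, x, hx, hxI, hxN⟩ := exists_rat_add_mem_of_volume_pos
    (measurableSet_Icc.diff (measurableSet_toMeasurable _ _)) hN hpos
  exact hxN (subset_toMeasurable _ _ ⟨hxI, q, by simpa using hx⟩)

/-- If every `ℕ → ℕ`-valued function is eventually dominated on `N`, then the same holds on the
union of the rational translates of `N`. -/
lemma exists_eventually_le_rat_translates {N : Set ℝ}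
    (hN : ∀ g : ℝ → ℕ → ℕ, ∃ h : ℕ → ℕ, ∀ x ∈ N, ∀ᶠ n in atTop, g x n ≤ h n)
    (φ : ℝ → ℕ → ℕ) :
    ∃ h : ℕ → ℕ, ∀ x : ℝ, (∃ q : ℚ, x - q ∈ N) → ∀ᶠ n in atTop, φ x n ≤ h n := by
  obtain ⟨e, he⟩ := exists_surjective_nat ℚ
  obtain ⟨h, hh⟩ := hN fun x n => ∑ i ∈ Finset.range (n + 1), φ (x + e i) n
  refine ⟨h, ?_⟩
  rintro x ⟨q, hq⟩
  obtain ⟨i, rfl⟩ := he q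
  filter_upwards [hh _ hq, eventually_ge_atTop i] with n hn hin
  refine le_trans ?_ hn
  have := Finset.single_le_sum (f := fun k => φ (x - e i + e k) n) (fun _ _ => Nat.zero_le _)
    (Finset.mem_range.2 (Nat.lt_succ_of_le hin))
  simpa using this

theorem stmt_12
    (hyp : ∃ N : Set ℝ, N ⊆ Set.Icc 0 1 ∧ 0 < volume N ∧
      ∀ g : ℝ → ℕ → ℕ, ∃ h : ℕ → ℕ, ∀ x ∈ N, ∀ᶠ n in atTop, g x n ≤ h n)
    (C : ℕ → Set ℕ) (hC : Monotone C)
    (ε : ℝ) (hε : 0 < ε)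
    (f : ℕ → ℝ → ℝ)
    (hmaps : ∀ n : ℕ, ∀ x ∈ Set.Icc (0 : ℝ) 1, f n x ∈ Set.Icc (0 : ℝ) 1)
    (hconv : CgPointwise C f (Set.Icc 0 1)) :
    ∃ A ⊆ Set.Icc (0 : ℝ) 1, ENNReal.ofReal (1 - ε) ≤ volume A ∧
      CgUniform C f A := by
  obtain ⟨N, -, hN0, hN⟩ := hyp
  have hφ : ∀ x (j : ℕ), ∃ k, x ∈ Icc (0 : ℝ) 1 → {n | 1 / ((j : ℝ) + 1) ≤ f n x} ⊆ C k := by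
    intro x j
    by_cases hx : x ∈ Icc (0 : ℝ) 1
    · obtain ⟨k, hk⟩ := hconv _ Nat.one_div_pos_of_nat x hx
      exact ⟨k, fun _ => hk⟩
    · exact ⟨0, fun h => absurd h hx⟩
  choose φ hφ using hφ
  obtain ⟨h, hh⟩ := exists_eventually_le_rat_translates hN φ
  let A : ℕ → Set ℝ := fun m => {x ∈ Icc (0 : ℝ) 1 | ∀ j, φ x j ≤ h j + m}
  have A_mono : Monotone A := fun m m' hm x hx =>
    ⟨hx.1, fun j => (hx.2 j).trans (Nat.add_le_add_left hm _)⟩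
  have sub : {x ∈ Icc (0 : ℝ) 1 | ∃ q : ℚ, x - q ∈ N} ⊆ ⋃ m, A m := by
    rintro x ⟨hxI, hxN⟩
    obtain ⟨n₀, hn₀⟩ := eventually_atTop.1 (hh x hxN)
    refine mem_iUnion.2 ⟨∑ j ∈ Finset.range n₀, φ x j, hxI, fun j => ?_⟩
    rcases le_or_gt n₀ j with hj | hj
    · exact (hn₀ j hj).trans (Nat.le_add_right _ _)
    · exact (Finset.single_le_sum (f := φ x) (fun _ _ => Nat.zero_le _)
        (Finset.mem_range.2 hj)).trans (Nat.le_add_left _ _)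
  have hlt : ENNReal.ofReal (1 - ε) < ⨆ m, volume (A m) := by
    rw [← A_mono.measure_iUnion]
    refine lt_of_lt_of_le ?_ ((one_le_volume_rat_translates hN0).trans (measure_mono sub))
    rw [ENNReal.ofReal_lt_one]
    linarith
  obtain ⟨m, hm⟩ := lt_iSup_iff.1 hlt
  refine ⟨A m, fun x hx => hx.1, hm.le, fun δ hδ => ?_⟩
  obtain ⟨j, hj⟩ := exists_nat_one_div_lt hδ
  refine ⟨h j + m, fun x hx n hn => hC (hx.2 j) (hφ x j hx.1 ?_)⟩
  exact hj.le.trans hn
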